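/- arXiv:1811.05731 — 3 statements merged into one kernel-verified Lean document; each statement's English description precedes it below -/
import Mathlib

section
/- Let f : ℝ³ → ℝ be smooth with compact support, and define the Newtonian potential u(x) = (1/(4π)) ∫_{ℝ³} f(y)/‖x − y‖ dy. Then u is twice continuously differentiable on ℝ³ and satisfies the Poisson equation −Δu(x) = f(x) for every x ∈ ℝ³. -/
open MeasureTheory Real

noncomputable def div3 (F : EuclideanSpace ℝ (Fin 3) → EuclideanSpace ℝ (Fin 3))
    (x : EuclideanSpace ℝ (Fin 3)) : ℝ :=
  ∑ i, fderiv ℝ F x (EuclideanSpace.single i 1) i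

noncomputable def lap (u : EuclideanSpace ℝ (Fin 3) → ℝ) (x : EuclideanSpace ℝ (Fin 3)) : ℝ :=
  div3 (gradient u) x

/-- The Newtonian potential of a density `f`. -/
noncomputable def newtonPot (f : EuclideanSpace ℝ (Fin 3) → ℝ)
    (x : EuclideanSpace ℝ (Fin 3)) : ℝ :=
  (1 / (4 * π)) * ∫ y, f y / ‖x - y‖

local notation "E3" => EuclideanSpace ℝ (Fin 3)

theorem Kli : LocallyIntegrable (fun y : E3 => ‖y‖⁻¹) := by
  refine locallyIntegrable_of_norm_le_rpow (C := 1) (α := 1) (by simp) (by simp) ?_ ?_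
  · filter_upwards with x
    simp [rpow_neg_one]
  · exact (by fun_prop : Measurable (fun y : E3 => ‖y‖⁻¹)).aestronglyMeasurable

theorem radial : ∫ z : E3, 3 * (1 + ‖z‖^2) ^ (-(5:ℝ)/2) = 4 * π := by
  rw [integral_fun_norm_addHaar volume (fun r : ℝ => 3 * (1 + r^2) ^ (-(5:ℝ)/2))]
  have h : ∫ y in Set.Ioi (0:ℝ), 3 * y^2 * (1+y^2)^(-(5:ℝ)/2) = 1 - 0 := by
    have hd : ∀ y : ℝ, HasDerivAt (fun y : ℝ => y^3 * (1+y^2)^(-(3:ℝ)/2)) (3 * y^2 * (1+y^2)^(-(5:ℝ)/2)) y := by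
      intro y
      have hp : 0 < 1 + y^2 := by positivity
      have := (hasDerivAt_pow 3 y).mul (((hasDerivAt_pow 2 y).const_add 1).rpow_const (p := -(3:ℝ)/2) (Or.inl hp.ne'))
      convert! this using 1
      rw [show (-(3:ℝ)/2) = -5/2 + 1 by norm_num, rpow_add hp, rpow_one]
      norm_num
      ring
    have ht : Filter.Tendsto (fun y : ℝ => y^3 * (1+y^2)^(-(3:ℝ)/2)) Filter.atTop (nhds 1) := by
      have h1 : Filter.Tendsto (fun y : ℝ => (y^2)⁻¹ + 1) Filter.atTop (nhds (0+1)) := 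
        ((Filter.tendsto_pow_atTop (by norm_num)).inv_tendsto_atTop).add_const 1
      have h2 := h1.rpow_const (p := -(3:ℝ)/2) (Or.inl (by norm_num))
      simp only [zero_add, one_rpow] at h2
      refine h2.congr' ?_
      filter_upwards [Filter.eventually_gt_atTop 0] with y hy
      have : (1 + y^2) = y^2 * ((y^2)⁻¹ + 1) := by field_simp
      rw [this, mul_rpow (by positivity) (by positivity), ← mul_assoc]
      rw [← rpow_natCast y 2, ← rpow_mul hy.le, ← rpow_natCast y 3, ← rpow_add hy]
      norm_num
    have := integral_Ioi_of_hasDerivAt_of_nonneg' (a := 0) (fun y _ => hd y) (fun y _ => by positivity) ht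
    simpa using this
  have h' : ∫ y in Set.Ioi (0:ℝ), y^2 * (3 * (1+y^2)^(-(5:ℝ)/2)) = 1 := by
    rw [sub_zero] at h
    refine Eq.trans ?_ h; congr; ext y; ring
  simp [measureReal_def, h']
  rw [ENNReal.toReal_ofReal (by positivity)]; ring

theorem conv_fderiv (h : E3 → ℝ) (hh : ContDiff ℝ 1 h) (hs : HasCompactSupport h) (v x : E3) :
    fderiv ℝ (convolution (fun y : E3 => ‖y‖⁻¹) h (ContinuousLinearMap.mul ℝ ℝ) volume) x v =
      (convolution (fun y : E3 => ‖y‖⁻¹) (fun z => fderiv ℝ h z v) (ContinuousLinearMap.mul ℝ ℝ) volume) x := by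
  rw [(hs.hasFDerivAt_convolution_right _ Kli hh x).fderiv]
  rw [convolution_precompR_apply _ Kli (hs.fderiv ℝ) (hh.continuous_fderiv one_ne_zero)]

theorem dK (e : ℝ) (he : 0 < e) (p : ℝ) (y : E3) : 
   HasFDerivAt (fun y : E3 => (‖y‖^2+e)^p) ((p * (‖y‖^2+e)^(p-1) * 2) • innerSL ℝ y) y := by
  have h1 : HasFDerivAt (fun y : E3 => ‖y‖^2+e) (2 • innerSL ℝ y) y := (hasStrictFDerivAt_norm_sq y).hasFDerivAt.add_const e
  convert! h1.rpow_const (p := p) (Or.inl (by positivity)) using 1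
  ext; simp; ring

theorem byparts (a h : E3 → ℝ) (ha : ContDiff ℝ 1 a) (hh : ContDiff ℝ 1 h)
    (hs : HasCompactSupport h) (v : E3) :
    ∫ y, a y * fderiv ℝ h y v = - ∫ y, fderiv ℝ a y v * h y := by
  have hda : Continuous fun y => fderiv ℝ a y v :=
    (ha.continuous_fderiv one_ne_zero).clm_apply continuous_const
  have hdh : Continuous fun y => fderiv ℝ h y v :=
    (hh.continuous_fderiv one_ne_zero).clm_apply continuous_const
  apply integral_mul_fderiv_eq_neg_fderiv_mul_of_integrable
  · exact (hda.mul hh.continuous).integrable_of_hasCompactSupport hs.mul_left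
  · exact (ha.continuous.mul hdh).integrable_of_hasCompactSupport (hs.fderiv_apply ℝ v).mul_left
  · exact (ha.continuous.mul hh.continuous).integrable_of_hasCompactSupport hs.mul_left
  · exact fun x _ => (ha.differentiable one_ne_zero) x
  · exact fun x _ => (hh.differentiable one_ne_zero) x

theorem Ksmooth (e : ℝ) (he : 0 < e) (p : ℝ) : ContDiff ℝ 1 (fun y : E3 => (‖y‖^2+e)^p) := by
  apply ContDiff.rpow_const_of_ne
  · exact (contDiff_norm_sq ℝ).add contDiff_const
  · intro x; positivity

theorem byparts2 (e : ℝ) (he : 0 < e) (g : E3 → ℝ) (hg : ContDiff ℝ 2 g)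
    (hs : HasCompactSupport g) (i : Fin 3) :
    ∫ y, (‖y‖^2+e)^(-(1:ℝ)/2) * fderiv ℝ (fun z => fderiv ℝ g z (EuclideanSpace.single i 1)) y
        (EuclideanSpace.single i 1) =
      ∫ y, (3 * (y i)^2 * (‖y‖^2+e)^(-(5:ℝ)/2) - (‖y‖^2+e)^(-(3:ℝ)/2)) * g y := by
  have hg1 : ContDiff ℝ 1 (fun z => fderiv ℝ g z (EuclideanSpace.single i 1)) :=
    (hg.fderiv_right (m := 1) (by norm_num)).clm_apply contDiff_const
  have hc : ContDiff ℝ 1 (fun y : E3 => y i) := by fun_prop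
  rw [byparts _ _ (Ksmooth e he _) hg1 (hs.fderiv_apply ℝ _)]
  have h1 : ∀ y : E3, fderiv ℝ (fun y : E3 => (‖y‖^2+e)^(-(1:ℝ)/2)) y (EuclideanSpace.single i 1)
      = - (y i * (‖y‖^2+e)^(-(3:ℝ)/2)) := by
    intro y
    rw [(dK e he _ y).fderiv]
    simp [EuclideanSpace.inner_single_right]
    norm_num
    ring
  simp_rw [h1, neg_mul, integral_neg, neg_neg]
  rw [byparts _ _ (hc.mul (Ksmooth e he _)) (hg.of_le (by norm_num)) hs, ← integral_neg]
  congr 1; ext y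
  have h2 : HasFDerivAt (fun y : E3 => y i) (EuclideanSpace.proj i : E3 →L[ℝ] ℝ) y :=
    (EuclideanSpace.proj i : E3 →L[ℝ] ℝ).hasFDerivAt
  have h3 := (h2.mul (dK e he (-(3:ℝ)/2) y)).fderiv
  erw [h3]
  simp [EuclideanSpace.inner_single_right]
  norm_num
  ring

theorem byparts3 (e : ℝ) (he : 0 < e) (g : E3 → ℝ) (hg : ContDiff ℝ 2 g)
    (hs : HasCompactSupport g) :
    ∫ y, (‖y‖^2+e)^(-(1:ℝ)/2) * ∑ i, fderiv ℝ (fun z => fderiv ℝ g z (EuclideanSpace.single i 1)) y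
        (EuclideanSpace.single i 1) =
      ∫ y, - (3 * e * (‖y‖^2+e)^(-(5:ℝ)/2)) * g y := by
  have hg1 : ∀ i, ContDiff ℝ 1 (fun z => fderiv ℝ g z (EuclideanSpace.single i (1:ℝ))) := fun i =>
    (hg.fderiv_right (m := 1) (by norm_num)).clm_apply contDiff_const
  simp_rw [Finset.mul_sum]
  rw [integral_finsetSum, Finset.sum_congr rfl (fun i _ => byparts2 e he g hg hs i), ← integral_finsetSum]
  · congr 1; ext y
    rw [← Finset.sum_mul]
    congr 1
    have hp : 0 < ‖y‖^2+e := by positivity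
    rw [show (-(3:ℝ)/2) = -5/2 + 1 by norm_num, rpow_add hp, rpow_one]
    have := EuclideanSpace.real_norm_sq_eq y
    rw [Fin.sum_univ_three] at this ⊢
    rw [this]; ring
  · intro i _
    refine Continuous.integrable_of_hasCompactSupport ?_ hs.mul_left
    refine Continuous.mul ?_ hg.continuous
    have h5 := (Ksmooth e he (-(5:ℝ)/2)).continuous
    have h3 := (Ksmooth e he (-(3:ℝ)/2)).continuous
    fun_prop
  · intro i _
    refine Continuous.integrable_of_hasCompactSupport ?_ ((hs.fderiv_apply ℝ _).fderiv_apply ℝ _).mul_left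
    exact (Ksmooth e he _).continuous.mul (((hg1 i).continuous_fderiv one_ne_zero).clm_apply continuous_const)

theorem scaled (ε : ℝ) (hε : 0 < ε) (g : E3 → ℝ) :
    ∫ y, - (3 * ε^2 * (‖y‖^2+ε^2)^(-(5:ℝ)/2)) * g y =
      - ∫ z : E3, 3 * (1 + ‖z‖^2) ^ (-(5:ℝ)/2) * g (ε • z) := by
  have := Measure.integral_comp_smul_of_nonneg (volume : Measure E3)
    (fun y => - (3 * ε^2 * (‖y‖^2+ε^2)^(-(5:ℝ)/2)) * g y) ε (hR := hε.le)
  simp only [finrank_euclideanSpace, Fintype.card_fin, smul_eq_mul] at this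
  have h2 : ∫ y, - (3 * ε^2 * (‖y‖^2+ε^2)^(-(5:ℝ)/2)) * g y = ε^3 * ((ε ^ 3)⁻¹ *
    ∫ y, - (3 * ε^2 * (‖y‖^2+ε^2)^(-(5:ℝ)/2)) * g y) := by field_simp
  rw [h2, ← this, ← integral_const_mul, ← integral_neg]
  congr 1; ext z
  have h3 : ‖ε • z‖^2 + ε^2 = ε^2 * (1 + ‖z‖^2) := by
    rw [norm_smul, norm_of_nonneg hε.le]; ring
  have h4 : (ε^2)^(-(5:ℝ)/2) = (ε^5)⁻¹ := by
    rw [← rpow_natCast ε 2, ← rpow_mul hε.le, ← rpow_natCast ε 5, ← rpow_neg hε.le]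
    norm_num
  rw [h3, mul_rpow (by positivity) (by positivity), h4]
  field_simp

theorem key (g : E3 → ℝ) (hg : ContDiff ℝ 2 g) (hs : HasCompactSupport g) :
    ∫ y, ‖y‖⁻¹ * ∑ i, fderiv ℝ (fun z => fderiv ℝ g z (EuclideanSpace.single i 1)) y
        (EuclideanSpace.single i 1) = - (4 * π * g 0) := by
  set D : E3 → ℝ := fun y => ∑ i, fderiv ℝ (fun z => fderiv ℝ g z (EuclideanSpace.single i 1)) y
        (EuclideanSpace.single i 1) with hD
  have hg1 : ∀ i, ContDiff ℝ 1 (fun z => fderiv ℝ g z (EuclideanSpace.single i (1:ℝ))) := fun i =>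
    (hg.fderiv_right (m := 1) (by norm_num)).clm_apply contDiff_const
  have hDc : Continuous D := continuous_finsetSum _ fun i _ =>
    ((hg1 i).continuous_fderiv one_ne_zero).clm_apply continuous_const
  have hDs : HasCompactSupport D := by
    rw [hD]; simp only [Fin.sum_univ_three]
    have := fun i => ((hs.fderiv_apply ℝ (EuclideanSpace.single i (1:ℝ))).fderiv_apply ℝ (EuclideanSpace.single i (1:ℝ)))
    exact ((this 0).add (this 1)).add (this 2)
  have hDi : Integrable (fun y => ‖y‖⁻¹ * D y) := by
    have := Kli.integrable_smul_right_of_hasCompactSupport hDc hDs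
    simpa using this
  have l1 : Filter.Tendsto (fun ε : ℝ => ∫ y, (‖y‖^2+ε^2)^(-(1:ℝ)/2) * D y)
      (nhdsWithin 0 (Set.Ioi 0)) (nhds (∫ y, ‖y‖⁻¹ * D y)) := by
    apply tendsto_integral_filter_of_dominated_convergence (fun y => ‖‖y‖⁻¹ * D y‖)
    · filter_upwards [self_mem_nhdsWithin] with ε hε
      exact ((Ksmooth (ε^2) (pow_pos hε 2) _).continuous.mul hDc).aestronglyMeasurable
    · filter_upwards [self_mem_nhdsWithin] with ε hε
      have h0 : ∀ᵐ y : E3, y ≠ 0 := by simp [ae_iff, measure_singleton]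
      filter_upwards [h0] with y hy
      rw [norm_mul, norm_mul]
      gcongr
      rw [norm_of_nonneg (by positivity), norm_of_nonneg (by positivity)]
      have hy' : 0 < ‖y‖ := norm_pos_iff.mpr hy
      have : ‖y‖⁻¹ = (‖y‖^2)^(-(1:ℝ)/2) := by
        rw [← rpow_natCast, ← rpow_mul hy'.le, ← rpow_neg_one]; norm_num
      rw [this]
      apply rpow_le_rpow_of_nonpos (by positivity) (by nlinarith [sq_nonneg ε]) (by norm_num)
    · exact hDi.norm
    · have h0 : ∀ᵐ y : E3, y ≠ 0 := by simp [ae_iff, measure_singleton]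
      filter_upwards [h0] with y hy
      have hy' : 0 < ‖y‖ := norm_pos_iff.mpr hy
      have : ‖y‖⁻¹ = (‖y‖^2 + 0^2)^(-(1:ℝ)/2) := by
        rw [zero_pow two_ne_zero, add_zero, ← rpow_natCast, ← rpow_mul hy'.le, ← rpow_neg_one]; norm_num
      rw [this]
      refine Filter.Tendsto.mul_const _ (Filter.Tendsto.rpow_const ?_ (Or.inl (by positivity)))
      have : Continuous fun ε : ℝ => ‖y‖^2 + ε^2 := by fun_prop
      exact (this.tendsto 0).mono_left nhdsWithin_le_nhds
  have hI : Integrable (fun z : E3 => 3 * (1 + ‖z‖^2) ^ (-(5:ℝ)/2)) :=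
    (integrable_rpow_neg_one_add_norm_sq (by simp; norm_num)).const_mul 3
  obtain ⟨C, hC⟩ := hs.exists_bound_of_continuous hg.continuous
  have l2 : Filter.Tendsto (fun ε : ℝ => - ∫ z : E3, 3 * (1 + ‖z‖^2) ^ (-(5:ℝ)/2) * g (ε • z))
      (nhdsWithin 0 (Set.Ioi 0)) (nhds (- ∫ z : E3, 3 * (1 + ‖z‖^2) ^ (-(5:ℝ)/2) * g 0)) := by
    apply Filter.Tendsto.neg
    apply tendsto_integral_filter_of_dominated_convergence
      (fun z => 3 * (1 + ‖z‖^2) ^ (-(5:ℝ)/2) * C)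
    · filter_upwards with ε
      have : Continuous fun z : E3 => g (ε • z) := hg.continuous.comp (by fun_prop)
      exact hI.aestronglyMeasurable.mul this.aestronglyMeasurable
    · filter_upwards with ε
      filter_upwards with z
      rw [norm_mul, norm_of_nonneg (by positivity)]
      gcongr
      exact hC _
    · exact hI.mul_const C
    · filter_upwards with z
      refine Filter.Tendsto.const_mul _ ?_
      have : Continuous fun ε : ℝ => g (ε • z) := hg.continuous.comp (by fun_prop)
      have := (this.tendsto 0).mono_left (nhdsWithin_le_nhds (s := Set.Ioi 0))
      simpa using this
  rw [integral_mul_const, radial] at l2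
  refine tendsto_nhds_unique l1 (l2.congr' ?_)
  filter_upwards [self_mem_nhdsWithin] with ε hε
  rw [← scaled ε hε, ← byparts3 (ε^2) (pow_pos hε 2) g hg hs]

theorem fderiv_refl (h : E3 → ℝ) (x y v : E3) :
    fderiv ℝ (fun y => h (x - y)) y v = - fderiv ℝ h (x - y) v := by
  have h1 : (fun y => h (x - y)) = fun y => (fun w => h (x + w)) (-y) := by
    ext y; rw [sub_eq_add_neg]
  have h2 := (ContinuousLinearEquiv.neg ℝ : E3 ≃L[ℝ] E3).comp_right_fderiv
    (f := fun w => h (x + w)) (x := y)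
  have h3 : fderiv ℝ (fun y => (fun w => h (x + w)) (-y)) y v
      = fderiv ℝ (fun w => h (x + w)) (-y) (-v) :=
    congrArg (fun L : E3 →L[ℝ] ℝ => L v) h2
  rw [h1, h3, fderiv_comp_add_left, ← sub_eq_add_neg, map_neg]

theorem newtonian_potential_solves_poisson
    (f : EuclideanSpace ℝ (Fin 3) → ℝ)
    (hf : ContDiff ℝ (⊤ : ℕ∞) f) (hsupp : HasCompactSupport f) :
    ContDiff ℝ 2 (newtonPot f) ∧ ∀ x, -lap (newtonPot f) x = f x := by
  have hf2 : ContDiff ℝ 2 f := (contDiff_infty.mp hf) 2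
  have hu : newtonPot f = fun x => (1 / (4 * π)) *
      (convolution (fun y : E3 => ‖y‖⁻¹) f (ContinuousLinearMap.mul ℝ ℝ) volume) x := by
    ext x
    rw [newtonPot, convolution_def, ← integral_sub_left_eq_self _ volume x]
    congr 2; ext y
    simp [div_eq_inv_mul]
  set N := (convolution (fun y : E3 => ‖y‖⁻¹) f (ContinuousLinearMap.mul ℝ ℝ) volume) with hN
  have hNs : ContDiff ℝ 2 N := hsupp.contDiff_convolution_right (n := 2) _ Kli hf2
  have hus : ContDiff ℝ 2 (newtonPot f) := by rw [hu]; exact contDiff_const.mul hNs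
  refine ⟨hus, fun x => ?_⟩
  have hdu : ∀ (i : Fin 3) z, fderiv ℝ (newtonPot f) z (EuclideanSpace.single i 1) =
      (1 / (4 * π)) * (convolution (fun y : E3 => ‖y‖⁻¹) (fun w => fderiv ℝ f w (EuclideanSpace.single i 1))
        (ContinuousLinearMap.mul ℝ ℝ) volume) z := by
    intro i z
    rw [hu, fderiv_const_mul (hNs.differentiable two_ne_zero z), ← conv_fderiv f (hf2.of_le (by norm_num)) hsupp]
    rfl
  have hf1 : ∀ i, ContDiff ℝ 1 (fun z => fderiv ℝ f z (EuclideanSpace.single i (1:ℝ))) := fun i =>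
    (hf2.fderiv_right (m := 1) (by norm_num)).clm_apply contDiff_const
  have hgr : Differentiable ℝ (gradient (newtonPot f)) := by
    have h1 : Differentiable ℝ (fderiv ℝ (newtonPot f)) :=
      (hus.fderiv_right (m := 1) (by norm_num)).differentiable one_ne_zero
    exact (InnerProductSpace.toDual ℝ E3).symm.toContinuousLinearEquiv.differentiable.comp h1
  have hl : ∀ i : Fin 3, fderiv ℝ (gradient (newtonPot f)) x (EuclideanSpace.single i 1) i =
      (1 / (4 * π)) * ∫ y, ‖y‖⁻¹ * fderiv ℝ (fun w => fderiv ℝ f w (EuclideanSpace.single i 1)) (x - y)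
        (EuclideanSpace.single i 1) := by
    intro i
    have h1 : (fun z => gradient (newtonPot f) z i) = fun z =>
      (1 / (4 * π)) * (convolution (fun y : E3 => ‖y‖⁻¹) (fun w => fderiv ℝ f w (EuclideanSpace.single i 1))
        (ContinuousLinearMap.mul ℝ ℝ) volume) z := by
      ext z
      rw [← hdu, gradient]
      have := InnerProductSpace.toDual_symm_apply (𝕜 := ℝ) (x := EuclideanSpace.single i (1:ℝ))
        (y := fderiv ℝ (newtonPot f) z)
      rw [← this]
      rw [EuclideanSpace.inner_single_right]
      simp
    have h2 : fderiv ℝ (fun z => gradient (newtonPot f) z i) x (EuclideanSpace.single i 1) =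
        fderiv ℝ (gradient (newtonPot f)) x (EuclideanSpace.single i 1) i := by
      have := ((EuclideanSpace.proj i : E3 →L[ℝ] ℝ).hasFDerivAt.comp x (hgr x).hasFDerivAt).fderiv
      exact congrArg (fun L : E3 →L[ℝ] ℝ => L (EuclideanSpace.single i 1)) this
    have hd := (hsupp.fderiv_apply ℝ (EuclideanSpace.single i (1:ℝ))).contDiff_convolution_right (n := 1)
      (ContinuousLinearMap.mul ℝ ℝ) Kli (hf1 i)
    rw [← h2, h1, fderiv_const_mul (hd.differentiable one_ne_zero x)]
    have := conv_fderiv _ (hf1 i) (hsupp.fderiv_apply ℝ _) (EuclideanSpace.single i (1:ℝ)) x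
    rw [convolution_def] at this
    simp only [ContinuousLinearMap.mul_apply'] at this
    rw [← this]
    rfl
  have hk := key (fun y => f (x - y)) (hf2.comp (contDiff_const.sub contDiff_id))
    (hsupp.comp_homeomorph (Homeomorph.subLeft x))
  simp only [fderiv_refl, sub_zero] at hk
  have h4 : ∀ (i : Fin 3) y, fderiv ℝ (fun z => - fderiv ℝ f (x - z) (EuclideanSpace.single i 1)) y
      (EuclideanSpace.single i 1) = fderiv ℝ (fun w => fderiv ℝ f w (EuclideanSpace.single i 1)) (x - y)
        (EuclideanSpace.single i 1) := by
    intro i y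
    have := fderiv_refl (fun w => fderiv ℝ f w (EuclideanSpace.single i 1)) x y (EuclideanSpace.single i 1)
    rw [fderiv_fun_neg, neg_apply, this, neg_neg]
  simp only [h4, Finset.mul_sum] at hk
  rw [integral_finsetSum] at hk
  · rw [lap, div3]
    simp only [hl]
    rw [← Finset.mul_sum, hk]
    field_simp
  · intro i _
    have := Kli.integrable_smul_right_of_hasCompactSupport
      (g := fun y => fderiv ℝ (fun w => fderiv ℝ f w (EuclideanSpace.single i 1)) (x - y)
        (EuclideanSpace.single i 1))
      ((((hf1 i).continuous_fderiv one_ne_zero).clm_apply continuous_const).comp (continuous_const.sub continuous_id))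
      (((hsupp.fderiv_apply ℝ _).fderiv_apply ℝ _).comp_homeomorph (Homeomorph.subLeft x))
    simpa using this
end

section
/- Let R > 0. For every x ∈ ℝ³ with ‖x‖ < R, one has (1/(4π)) ∫_{‖y‖ ≤ R} (x₃ − y₃)/‖x − y‖³ dy = x₃/3. In other words, the magnetostatic potential of the uniformly magnetized ball M = M_s e₃ on the ball of radius R equals u(x) = M_s x₃/3 at every interior point x. -/
open MeasureTheory Real

abbrev E3 := EuclideanSpace ℝ (Fin 3)

lemma polar3 (f : E3 → ℝ) (hf : Integrable f) :
    ∫ v, f v = ∫ w : Metric.sphere (0 : E3) 1, (∫ r in Set.Ioi (0 : ℝ), r ^ 2 * f (r • (w : E3)))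
      ∂(volume : Measure E3).toSphere := by
  have hd : Module.finrank ℝ E3 - 1 = 2 := by simp
  have hmp := (volume : Measure E3).measurePreserving_homeomorphUnitSphereProd
  rw [hd] at hmp
  let F : Metric.sphere (0 : E3) 1 × Set.Ioi (0 : ℝ) → ℝ := fun p => f ((p.2 : ℝ) • (p.1 : E3))
  have hFc : ∀ z : ({0}ᶜ : Set E3), F (homeomorphUnitSphereProd E3 z) = f z := by
    intro z
    have h := congrArg Subtype.val ((homeomorphUnitSphereProd E3).symm_apply_apply z)
    simp only [homeomorphUnitSphereProd_symm_apply_coe] at h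
    simp only [F]
    rw [h]
  have hint : Integrable F ((volume : Measure E3).toSphere.prod (Measure.volumeIoiPow 2)) := by
    rw [← hmp.integrable_comp_emb (Homeomorph.measurableEmbedding _)]
    have : (F ∘ homeomorphUnitSphereProd E3) = f ∘ Subtype.val := funext hFc
    rw [this, ← integrableOn_iff_comap_subtypeVal (by measurability)]
    exact hf.integrableOn
  calc ∫ v, f v = ∫ z : ({0}ᶜ : Set E3), f z.1 ∂((volume : Measure E3).comap (↑)) := by
        rw [integral_subtype_comap (measurableSet_singleton _).compl f, restrict_compl_singleton]
    _ = ∫ p, F p ∂((volume : Measure E3).toSphere.prod (Measure.volumeIoiPow 2)) := by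
        rw [← hmp.integral_comp (Homeomorph.measurableEmbedding _)]
        simp only [hFc]
    _ = _ := by
        rw [integral_prod _ hint]
        congr 1
        ext w
        simp only [Measure.volumeIoiPow, ENNReal.ofReal]
        rw [integral_withDensity_eq_integral_smul,
          integral_subtype_comap measurableSet_Ioi
            fun a ↦ Real.toNNReal (a ^ 2) • f (a • (w : E3))]
        · refine setIntegral_congr_fun measurableSet_Ioi fun x hx ↦ ?_
          simp only [NNReal.smul_def, smul_eq_mul, Real.coe_toNNReal _ (pow_nonneg (le_of_lt hx.out) _)]
        · exact (measurable_subtype_coe.pow_const _).real_toNNReal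

lemma int_kernel (S : ℝ) (s : Set E3) (hs : MeasurableSet s) (hsub : s ⊆ Metric.ball 0 S) :
    Integrable (s.indicator fun v : E3 => v 2 / ‖v‖ ^ 3) := by
  rw [integrable_indicator_iff hs]
  have h1 : IntegrableOn (fun v : E3 => (‖v‖ ^ 2)⁻¹) (Metric.ball 0 S) := by
    rw [integrableOn_fun_norm_addHaar volume (f := fun r : ℝ => (r ^ 2)⁻¹)]
    have : IntegrableOn (fun _ : ℝ => (1 : ℝ)) (Set.Ioo 0 S) := by
      simp
    refine this.congr_fun ?_ measurableSet_Ioo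
    intro r hr
    have : r ≠ 0 := hr.1.ne'
    simp [this]
  refine Integrable.mono' (h1.mono_set hsub) ?_ ?_
  · exact Measurable.aestronglyMeasurable (by fun_prop)
  · refine Filter.Eventually.of_forall fun v => ?_
    rw [norm_div, norm_pow, norm_norm]
    have := PiLp.norm_apply_le v 2
    rcases eq_or_ne v 0 with rfl | hv
    · simp
    · have : 0 < ‖v‖ := norm_pos_iff.2 hv
      rw [div_le_iff₀ (by positivity)]
      field_simp
      exact PiLp.norm_apply_le v 2

lemma moment_diag : ∫ v in Metric.closedBall (0 : E3) 1, v 2 * v 2 = 4 * π / 15 := by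
  have key : ∀ i : Fin 3, ∫ v in Metric.closedBall (0 : E3) 1, v i * v i =
      ∫ v in Metric.closedBall (0 : E3) 1, v 2 * v 2 := by
    intro i
    let L : E3 ≃ₗᵢ[ℝ] E3 := LinearIsometryEquiv.piLpCongrLeft 2 ℝ ℝ (Equiv.swap i 2)
    have h := L.measurePreserving.setIntegral_preimage_emb
      L.toHomeomorph.measurableEmbedding (fun v : E3 => v i * v i) (Metric.closedBall 0 1)
    rw [← h]
    have h2 : L ⁻¹' Metric.closedBall 0 1 = Metric.closedBall 0 1 := by
      ext v; simp
    rw [h2]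
    congr 1
    ext v
    simp [L, LinearIsometryEquiv.piLpCongrLeft_apply, Equiv.piCongrLeft']
  have hi : ∀ i : Fin 3, IntegrableOn (fun v : E3 => v i * v i) (Metric.closedBall 0 1) := fun i =>
    (Continuous.continuousOn (by fun_prop)).integrableOn_compact (isCompact_closedBall _ _)
  have hsum : ∫ v in Metric.closedBall (0 : E3) 1, ‖v‖ ^ 2 = 4 * π / 5 := by
    have := integral_fun_norm_addHaar (volume : Measure E3)
      (f := (Set.Iic 1).indicator fun r : ℝ => r ^ 2)
    have e : (fun v : E3 => (Set.Iic 1).indicator (fun r : ℝ => r ^ 2) ‖v‖) =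
      (Metric.closedBall (0 : E3) 1).indicator fun v => ‖v‖ ^ 2 := by
      ext v; simp [Set.indicator]
    rw [e, integral_indicator measurableSet_closedBall] at this
    rw [this]
    have e2 : ∀ y : ℝ, y ^ (Module.finrank ℝ E3 - 1) • (Set.Iic 1).indicator (fun r : ℝ => r ^ 2) y
      = (Set.Iic 1).indicator (fun r : ℝ => r ^ 4) y := by
      intro y
      by_cases h : y ≤ 1 <;> simp [Set.indicator, h]
      ring
    simp_rw [e2]
    rw [setIntegral_indicator measurableSet_Iic, Set.Ioi_inter_Iic,
      ← intervalIntegral.integral_of_le zero_le_one, integral_pow]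
    have : 0 ≤ π * 4 / 3 := by positivity
    simp [Measure.real, this]
    ring
  have : ∫ v in Metric.closedBall (0 : E3) 1, ‖v‖ ^ 2 =
      ∫ v in Metric.closedBall (0 : E3) 1, (v 0 * v 0 + v 1 * v 1 + v 2 * v 2) := by
    congr 1
    ext v
    rw [EuclideanSpace.real_norm_sq_eq, Fin.sum_univ_three]
    ring
  rw [integral_add (by exact (hi 0).add (hi 1)) (hi 2), integral_add (hi 0) (hi 1), key 0, key 1, hsum] at this
  linarith

lemma moment_off (i : Fin 3) (hi : i ≠ 2) :
    ∫ v in Metric.closedBall (0 : E3) 1, v 2 * v i = 0 := by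
  let L : E3 ≃ₗᵢ[ℝ] E3 := LinearIsometryEquiv.piLpCongrRight 2
    (fun j : Fin 3 => if j = 2 then LinearIsometryEquiv.neg ℝ else LinearIsometryEquiv.refl ℝ ℝ)
  have h := L.measurePreserving.setIntegral_preimage_emb
    L.toHomeomorph.measurableEmbedding (fun v : E3 => v 2 * v i) (Metric.closedBall 0 1)
  have h2 : L ⁻¹' Metric.closedBall 0 1 = Metric.closedBall 0 1 := by
    ext v; simp
  rw [h2] at h
  have h3 : ∀ v : E3, L v 2 * L v i = - (v 2 * v i) := by
    intro v
    simp [L, hi]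
  simp_rw [h3] at h
  rw [integral_neg] at h
  linarith

lemma moment (x : E3) :
    ∫ v, (Metric.closedBall (0 : E3) 1).indicator (fun v => 10 * (v 2 * inner ℝ x v)) v
      = 8 * π / 3 * x 2 := by
  have hi : ∀ i : Fin 3, IntegrableOn (fun v : E3 => x i * (v 2 * v i)) (Metric.closedBall 0 1) :=
    fun i => (Continuous.continuousOn (by fun_prop)).integrableOn_compact (isCompact_closedBall _ _)
  rw [integral_indicator measurableSet_closedBall, integral_const_mul]
  have : ∫ v in Metric.closedBall (0 : E3) 1, v 2 * inner ℝ x v =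
      ∫ v in Metric.closedBall (0 : E3) 1,
        (x 0 * (v 2 * v 0) + x 1 * (v 2 * v 1) + x 2 * (v 2 * v 2)) := by
    congr 1
    ext v
    simp [PiLp.inner_apply, Fin.sum_univ_three]
    ring
  rw [this, integral_add (by exact (hi 0).add (hi 1)) (hi 2), integral_add (hi 0) (hi 1),
    integral_const_mul, integral_const_mul, integral_const_mul, moment_off 0 (by decide),
    moment_off 1 (by decide), moment_diag]
  ring

lemma ray (R : ℝ) (x w : E3) (hx : ‖x‖ < R) (hw : ‖w‖ = 1) (r : ℝ) (hr : 0 < r) :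
    ‖x - r • w‖ ≤ R ↔ r ≤ inner ℝ x w + √((inner ℝ x w) ^ 2 + (R ^ 2 - ‖x‖ ^ 2)) := by
  have hR : 0 < R := (norm_nonneg x).trans_lt hx
  have hD : 0 < R ^ 2 - ‖x‖ ^ 2 := by nlinarith [norm_nonneg x]
  have e : ‖x - r • w‖ ^ 2 = ‖x‖ ^ 2 - 2 * (r * inner ℝ x w) + r ^ 2 := by
    rw [norm_sub_sq_real, inner_smul_right, norm_smul, hw]; simp
  set c : ℝ := inner ℝ x w
  set s := √(c ^ 2 + (R ^ 2 - ‖x‖ ^ 2)) with hs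
  have hs2 : s ^ 2 = c ^ 2 + (R ^ 2 - ‖x‖ ^ 2) := Real.sq_sqrt (by positivity)
  have hcs : |c| < s := by
    rw [hs]; apply Real.lt_sqrt_of_sq_lt; rw [sq_abs]; linarith
  have hc := abs_lt.1 hcs
  rw [← pow_le_pow_iff_left₀ (norm_nonneg _) hR.le two_ne_zero, e]
  constructor
  · intro h
    by_contra! h'
    nlinarith
  · intro h
    nlinarith

lemma ray_int (R : ℝ) (x w : E3) (hx : ‖x‖ < R) (hw : ‖w‖ = 1) :
    IntegrableOn (fun r : ℝ => r ^ 2 *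
      {v : E3 | ‖x - v‖ ≤ R}.indicator (fun v => v 2 / ‖v‖ ^ 3) (r • w)) (Set.Ioi 0) ∧
    ∫ r in Set.Ioi (0 : ℝ), r ^ 2 *
      {v : E3 | ‖x - v‖ ≤ R}.indicator (fun v => v 2 / ‖v‖ ^ 3) (r • w) =
      w 2 * (inner ℝ x w + √((inner ℝ x w) ^ 2 + (R ^ 2 - ‖x‖ ^ 2))) := by
  have hD : 0 < R ^ 2 - ‖x‖ ^ 2 := by nlinarith [norm_nonneg x]
  set ℓ := inner ℝ x w + √((inner ℝ x w) ^ 2 + (R ^ 2 - ‖x‖ ^ 2)) with hl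
  have hl0 : 0 ≤ ℓ := by
    have : |inner ℝ x w| ≤ √((inner ℝ x w) ^ 2 + (R ^ 2 - ‖x‖ ^ 2)) :=
      Real.abs_le_sqrt (by linarith)
    linarith [neg_abs_le (inner ℝ x w)]
  have e : Set.EqOn (fun r : ℝ => r ^ 2 *
      {v : E3 | ‖x - v‖ ≤ R}.indicator (fun v => v 2 / ‖v‖ ^ 3) (r • w))
      ((Set.Iic ℓ).indicator fun _ => w 2) (Set.Ioi 0) := by
    intro r hr
    have hr' : 0 < r := hr
    have := ray R x w hx hw r hr
    simp only [Set.indicator, Set.mem_ofPred_eq, Set.mem_Iic, this, ← hl]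
    split_ifs
    · simp [norm_smul, hw, abs_of_pos hr']
      field_simp
    · simp
  constructor
  · rw [integrableOn_congr_fun e measurableSet_Ioi, integrableOn_indicator_iff measurableSet_Iic,
      Set.inter_comm, Set.Ioi_inter_Iic]
    simp
  · rw [setIntegral_congr_fun measurableSet_Ioi e, setIntegral_indicator measurableSet_Iic,
      Set.Ioi_inter_Iic]
    simp [hl0, mul_comm]

lemma ray_mom (x w : E3) (hw : ‖w‖ = 1) :
    ∫ r in Set.Ioi (0 : ℝ), r ^ 2 * (Metric.closedBall (0 : E3) 1).indicator
      (fun v => 10 * (v 2 * inner ℝ x v)) (r • w) = 2 * (w 2 * inner ℝ x w) := by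
  have e : Set.EqOn (fun r : ℝ => r ^ 2 * (Metric.closedBall (0 : E3) 1).indicator
      (fun v => 10 * (v 2 * inner ℝ x v)) (r • w))
      ((Set.Iic 1).indicator fun r => 10 * (w 2 * inner ℝ x w) * r ^ 4) (Set.Ioi 0) := by
    intro r hr
    have hr' : 0 < r := hr
    simp only [Set.indicator, Metric.mem_closedBall, dist_zero_right, norm_smul, hw,
      Real.norm_eq_abs, abs_of_pos hr', mul_one, Set.mem_Iic]
    split_ifs
    · simp [inner_smul_right]
      ring
    · simp
  rw [setIntegral_congr_fun measurableSet_Ioi e, setIntegral_indicator measurableSet_Iic,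
      Set.Ioi_inter_Iic, ← intervalIntegral.integral_of_le zero_le_one,
      intervalIntegral.integral_const_mul, integral_pow]
  norm_num
  ring

/-- Interior potential of the uniformly magnetized ball: for `‖x‖ < R`,
`(1/4π) ∫_{‖y‖ ≤ R} (x₃ - y₃)/‖x - y‖³ dy = x₃/3`. -/
theorem magPot_uniform_ball_interior (R : ℝ) (hR : 0 < R) :
    ∀ x : EuclideanSpace ℝ (Fin 3), ‖x‖ < R →
      (1 / (4 * π)) * ∫ y in Metric.closedBall (0 : EuclideanSpace ℝ (Fin 3)) R,
          (x 2 - y 2) / ‖x - y‖ ^ 3 = x 2 / 3 := by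
  intro x hx
  let f : E3 → ℝ := {v : E3 | ‖x - v‖ ≤ R}.indicator (fun v => v 2 / ‖v‖ ^ 3)
  have hf : Integrable f := by
    apply int_kernel (R + ‖x‖ + 1)
    · exact (isClosed_le (by fun_prop) (by fun_prop)).measurableSet
    · intro v hv
      have hv' : ‖x - v‖ ≤ R := hv
      have := norm_sub_norm_le v x
      rw [norm_sub_rev] at this
      rw [mem_ball_zero_iff]
      linarith
  have h1 : ∫ y in Metric.closedBall (0 : E3) R, (x 2 - y 2) / ‖x - y‖ ^ 3 = ∫ v, f v := by
    rw [← integral_indicator measurableSet_closedBall, ← integral_sub_left_eq_self f volume x]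
    congr 1
    ext y
    simp [f, Set.indicator]
  have h2 : ∫ v, (f v + f (-v)) = 2 * ∫ v, f v := by
    rw [integral_add hf hf.comp_neg, integral_neg_eq_self f volume]
    ring
  have h3 : ∫ v, (f v + f (-v)) = 8 * π / 3 * x 2 := by
    rw [← moment x, polar3 (fun v => f v + f (-v)) (hf.add hf.comp_neg), polar3]
    · congr 1
      ext w
      have hw : ‖(w : E3)‖ = 1 := by simp
      have hw' : ‖-(w : E3)‖ = 1 := by simp
      rw [ray_mom x w hw]
      obtain ⟨a1, a2⟩ := ray_int R x w hx hw
      obtain ⟨b1, b2⟩ := ray_int R x (-w) hx hw'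
      simp only [mul_add, ← smul_neg]
      rw [integral_add a1 b1, a2, b2]
      simp [inner_neg_right]
      ring
    · rw [integrable_indicator_iff measurableSet_closedBall]
      exact (Continuous.continuousOn (by fun_prop)).integrableOn_compact (isCompact_closedBall _ _)
  rw [h1]
  have h4 : ∫ v, f v = 4 * π / 3 * x 2 := by linarith
  rw [h4]
  field_simp
end

section
/- Let 0 < b < a and let Ω = {p ∈ ℝ³ : (√(p₁² + p₂²) − a)² + p₃² < b²} be the open solid torus of revolution, and let M(p) = M_s (−p₂, p₁, 0)/√(p₁² + p₂²) be the purely azimuthal magnetization on Ω. Then the magnetostatic potential of M (extended by 0 outside Ω) vanishes identically: for every x ∈ ℝ³, (1/(4π)) ∫_Ω M(y)·(x − y)/‖x − y‖³ dy = 0; consequently the magnetostatic field H = −∇u and the magnetostatic energy density e_d of the azimuthally magnetized torus are exactly zero. -/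
open MeasureTheory Real

/-- The azimuthal unit vector field `m(p) = (-p₂, p₁, 0)/√(p₁² + p₂²)`. -/
noncomputable def azimuthal (p : EuclideanSpace ℝ (Fin 3)) : EuclideanSpace ℝ (Fin 3) :=
  (Real.sqrt (p 0 ^ 2 + p 1 ^ 2))⁻¹ •
    (WithLp.equiv 2 (Fin 3 → ℝ)).symm ![-(p 1), p 0, 0]

/-- The open solid torus of revolution with radii `a > b > 0`. -/
def solidTorus (a b : ℝ) : Set (EuclideanSpace ℝ (Fin 3)) :=
  {p | (Real.sqrt (p 0 ^ 2 + p 1 ^ 2) - a) ^ 2 + p 2 ^ 2 < b ^ 2}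

/-- Reflection across a plane containing the third axis. -/
noncomputable def zRefl (c s : ℝ) (h : c ^ 2 + s ^ 2 = 1) :
    EuclideanSpace ℝ (Fin 3) ≃ₗᵢ[ℝ] EuclideanSpace ℝ (Fin 3) where
  toFun y := !₂[c * y 0 + s * y 1, s * y 0 - c * y 1, y 2]
  invFun y := !₂[c * y 0 + s * y 1, s * y 0 - c * y 1, y 2]
  map_add' x y := by ext i; fin_cases i <;> simp <;> ring
  map_smul' r y := by ext i; fin_cases i <;> simp <;> ring
  left_inv y := by
    ext i; fin_cases i <;> simp
    · linear_combination (y 0) * h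
    · linear_combination (y 1) * h
  right_inv y := by
    ext i; fin_cases i <;> simp
    · linear_combination (y 0) * h
    · linear_combination (y 1) * h
  norm_map' y := by
    simp only [EuclideanSpace.norm_eq, Fin.sum_univ_three, Real.norm_eq_abs, sq_abs]
    congr 1
    simp
    linear_combination (y 0 ^ 2 + y 1 ^ 2) * h

theorem zRefl_apply (c s : ℝ) (h : c ^ 2 + s ^ 2 = 1) (y : EuclideanSpace ℝ (Fin 3)) :
    zRefl c s h y = !₂[c * y 0 + s * y 1, s * y 0 - c * y 1, y 2] := rfl

theorem exists_refl (p q : ℝ) : ∃ c s : ℝ, c ^ 2 + s ^ 2 = 1 ∧ c * p + s * q = p ∧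
    s * p - c * q = q := by
  by_cases h : p ^ 2 + q ^ 2 = 0
  · have hp : p = 0 := by nlinarith [sq_nonneg p, sq_nonneg q]
    have hq : q = 0 := by nlinarith [sq_nonneg p, sq_nonneg q]
    exact ⟨1, 0, by simp [hp, hq]⟩
  · refine ⟨(p ^ 2 - q ^ 2) / (p ^ 2 + q ^ 2), 2 * p * q / (p ^ 2 + q ^ 2), ?_, ?_, ?_⟩ <;>
      field_simp <;> ring

/-- The magnetostatic potential of the azimuthally magnetized solid torus vanishes
identically, so its demagnetizing field and magnetostatic energy density are exactly
zero. -/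
theorem magPot_azimuthal_torus_zero (a b Ms : ℝ) (hb : 0 < b) (hba : b < a) (hMs : 0 < Ms) :
    ∀ x : EuclideanSpace ℝ (Fin 3),
      (1 / (4 * π)) * ∫ y in solidTorus a b,
          (inner ℝ (Ms • azimuthal y) (x - y) : ℝ) / ‖x - y‖ ^ 3 = 0 := by
  intro x
  obtain ⟨c, s, h, h0, h1⟩ := exists_refl (x 0) (x 1)
  have hx : zRefl c s h x = x := by
    rw [zRefl_apply]; ext i; fin_cases i <;> simp [h0, h1]
  have hr : ∀ y, (zRefl c s h y) 0 ^ 2 + (zRefl c s h y) 1 ^ 2 = y 0 ^ 2 + y 1 ^ 2 := by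
    intro y
    simp [zRefl_apply]
    linear_combination (y 0 ^ 2 + y 1 ^ 2) * h
  have hpre : (zRefl c s h) ⁻¹' solidTorus a b = solidTorus a b := by
    ext y
    simp only [Set.mem_preimage, solidTorus, Set.mem_setOf_eq, hr]
    simp [zRefl_apply]
  have key := (zRefl c s h).measurePreserving.setIntegral_preimage_emb
    (zRefl c s h).toHomeomorph.measurableEmbedding
    (fun y => (inner ℝ (Ms • azimuthal y) (x - y) : ℝ) / ‖x - y‖ ^ 3) (solidTorus a b)
  rw [hpre] at key
  have hf : ∀ y, (inner ℝ (Ms • azimuthal (zRefl c s h y)) (x - zRefl c s h y) : ℝ)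
      / ‖x - zRefl c s h y‖ ^ 3 = - ((inner ℝ (Ms • azimuthal y) (x - y) : ℝ) / ‖x - y‖ ^ 3) := by
    intro y
    have hn : ‖x - zRefl c s h y‖ = ‖x - y‖ := by
      conv_lhs => rw [← hx, ← map_sub, LinearIsometryEquiv.norm_map]
    rw [hn, ← neg_div]
    congr 1
    rw [inner_smul_left, inner_smul_left, azimuthal, azimuthal, hr, inner_smul_left,
      inner_smul_left]
    simp only [PiLp.inner_apply, Fin.sum_univ_three]
    simp [zRefl_apply]
    linear_combination Ms * (√(y 0 ^ 2 + y 1 ^ 2))⁻¹ * (y 1 * h0 - y 0 * h1)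
  simp only [hf, integral_neg] at key
  have : ∫ y in solidTorus a b,
          (inner ℝ (Ms • azimuthal y) (x - y) : ℝ) / ‖x - y‖ ^ 3 = 0 := by linarith
  rw [this, mul_zero]
end
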